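/- Let k be a field of characteristic zero and V = k² with standard basis e₁, e₂. Then the maps F intertwine the combinatorial differential D with the tensor-product map: for all m, p ≥ 0 and every pair (w, u) of words over {1, 2} of lengths m and p, F_{m+1,p+1}(D_{m,p}(w, u)) = id_V ⊗ δ_{w,u} + (−1)^{p+m+1} δ_{w,u} ⊗ id_V in Hom_k(V^{⊗(m+1)}, V^{⊗(p+1)}), under the canonical isomorphisms V^{⊗(m+1)} ≅ V ⊗ V^{⊗m} ≅ V^{⊗m} ⊗ V and V^{⊗(p+1)} ≅ V ⊗ V^{⊗p} ≅ V^{⊗p} ⊗ V. -/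

import Mathlib

/-- Words of length `m` over the alphabet `{1, 2}` (paths of length `m` in the
two-loops quiver). -/
abbrev Word (m : ℕ) := Fin m → Fin 2

/-- The `m`-th tensor power of `V = k²`, modelled concretely as the space of functions
`(Fin m → Fin 2) → k`, with basis `e_w` (the indicator of the word `w`) corresponding to
the basis tensor `e_{w₁} ⊗ ⋯ ⊗ e_{w_m}`. -/
abbrev TPow (k : Type) [Field k] (m : ℕ) := Word m → k

/-- The linear map `δ_{w,u} : V^{⊗m} → V^{⊗p}` sending the basis tensor indexed by `w`
to the basis tensor indexed by `u` and every other basis tensor to `0`. -/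
def deltaMap (k : Type) [Field k] {m p : ℕ} (w : Word m) (u : Word p) :
    TPow k m →ₗ[k] TPow k p where
  toFun f := fun x => if x = u then f w else 0
  map_add' f g := by funext x; by_cases h : x = u <;> simp [h]
  map_smul' c f := by funext x; by_cases h : x = u <;> simp [h]

/-- `id_V ⊗ g : V^{⊗(m+1)} → V^{⊗(p+1)}`, under the canonical identifications
`V^{⊗(m+1)} ≅ V ⊗ V^{⊗m}` and `V^{⊗(p+1)} ≅ V ⊗ V^{⊗p}`. -/
def idTensor (k : Type) [Field k] {m p : ℕ} (g : TPow k m →ₗ[k] TPow k p) :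
    TPow k (m + 1) →ₗ[k] TPow k (p + 1) where
  toFun f := fun y => g (fun x => f (Fin.cons (y 0) x)) (Fin.tail y)
  map_add' f₁ f₂ := by
    funext y
    show g (fun x => (f₁ + f₂) (Fin.cons (y 0) x)) (Fin.tail y)
        = g (fun x => f₁ (Fin.cons (y 0) x)) (Fin.tail y)
          + g (fun x => f₂ (Fin.cons (y 0) x)) (Fin.tail y)
    rw [show (fun x => (f₁ + f₂) (Fin.cons (y 0) x))
        = (fun x => f₁ (Fin.cons (y 0) x)) + fun x => f₂ (Fin.cons (y 0) x) from rfl,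
      map_add]
    rfl
  map_smul' c f := by
    funext y
    show g (fun x => (c • f) (Fin.cons (y 0) x)) (Fin.tail y)
        = c • g (fun x => f (Fin.cons (y 0) x)) (Fin.tail y)
    rw [show (fun x => (c • f) (Fin.cons (y 0) x))
        = c • fun x => f (Fin.cons (y 0) x) from rfl, map_smul]
    rfl

/-- `g ⊗ id_V : V^{⊗(m+1)} → V^{⊗(p+1)}`, under the canonical identifications
`V^{⊗(m+1)} ≅ V^{⊗m} ⊗ V` and `V^{⊗(p+1)} ≅ V^{⊗p} ⊗ V`. -/
def tensorId (k : Type) [Field k] {m p : ℕ} (g : TPow k m →ₗ[k] TPow k p) :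
    TPow k (m + 1) →ₗ[k] TPow k (p + 1) where
  toFun f := fun y => g (fun x => f (Fin.snoc x (y (Fin.last p)))) (Fin.init y)
  map_add' f₁ f₂ := by
    funext y
    show g (fun x => (f₁ + f₂) (Fin.snoc x (y (Fin.last p)))) (Fin.init y)
        = g (fun x => f₁ (Fin.snoc x (y (Fin.last p)))) (Fin.init y)
          + g (fun x => f₂ (Fin.snoc x (y (Fin.last p)))) (Fin.init y)
    rw [show (fun x => (f₁ + f₂) (Fin.snoc x (y (Fin.last p))))
        = (fun x => f₁ (Fin.snoc x (y (Fin.last p))))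
          + fun x => f₂ (Fin.snoc x (y (Fin.last p))) from rfl,
      map_add]
    rfl
  map_smul' c f := by
    funext y
    show g (fun x => (c • f) (Fin.snoc x (y (Fin.last p)))) (Fin.init y)
        = c • g (fun x => f (Fin.snoc x (y (Fin.last p)))) (Fin.init y)
    rw [show (fun x => (c • f) (Fin.snoc x (y (Fin.last p))))
        = c • fun x => f (Fin.snoc x (y (Fin.last p))) from rfl, map_smul]
    rfl

/-- The combinatorial differential `D_{m,p}` on the span of pairs of parallel paths in the
two-loops quiver: `D_{m,p}(w, u) = Σ_{a} (aw, au) + (−1)^{p+m+1} Σ_{a} (wa, ua)`. -/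
noncomputable def D2 (k : Type) [Field k] (m p : ℕ) :
    ((Word m × Word p) →₀ k) →ₗ[k] ((Word (m + 1) × Word (p + 1)) →₀ k) :=
  Finsupp.lift _ k _ fun x =>
    (∑ a : Fin 2, Finsupp.single (Fin.cons a x.1, Fin.cons a x.2) (1 : k))
      + ((-1 : k) ^ (p + m + 1)) •
        ∑ a : Fin 2, Finsupp.single (Fin.snoc x.1 a, Fin.snoc x.2 a) (1 : k)

/-- The linear map `F_{m,p} : k(Q_m//Q_p) → Hom_k(V^{⊗m}, V^{⊗p})`, `(w,u) ↦ δ_{w,u}`. -/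
noncomputable def F2 (k : Type) [Field k] (m p : ℕ) :
    ((Word m × Word p) →₀ k) →ₗ[k] (TPow k m →ₗ[k] TPow k p) :=
  Finsupp.lift _ k _ fun x => deltaMap k x.1 x.2

/-!
Since `id_V = ∑ a, δ_{a,a}`, tensoring on the left gives `id_V ⊗ δ_{w,u} = ∑ a, δ_{aw,au}` and
tensoring on the right gives `δ_{w,u} ⊗ id_V = ∑ a, δ_{wa,ua}`. These two sums are the images
under `F` of the two sums in `D(w, u)`, and `F` is linear.
-/

section

variable (k : Type) [Field k] {m p : ℕ} (w : Word m) (u : Word p)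

theorem deltaMap_apply (f : TPow k m) (x : Word p) :
    deltaMap k w u f x = if x = u then f w else 0 :=
  rfl

theorem idTensor_apply_cons (g : TPow k m →ₗ[k] TPow k p) (f : TPow k (m + 1))
    (b : Fin 2) (x : Word p) :
    idTensor k g f (Fin.cons b x) = g (fun v => f (Fin.cons b v)) x :=
  rfl

theorem tensorId_apply_snoc (g : TPow k m →ₗ[k] TPow k p) (f : TPow k (m + 1))
    (x : Word p) (b : Fin 2) :
    tensorId k g f (Fin.snoc x b) = g (fun v => f (Fin.snoc v b)) x := by
  simp only [tensorId, LinearMap.coe_mk, AddHom.coe_mk, Fin.snoc_last, Fin.init_snoc]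

theorem idTensor_deltaMap :
    idTensor k (deltaMap k w u) =
      ∑ a : Fin 2, deltaMap k (Fin.cons a w : Word (m + 1)) (Fin.cons a u : Word (p + 1)) := by
  refine LinearMap.ext fun f => funext fun y => ?_
  cases y using Fin.consCases with
  | cons b x =>
    calc idTensor k (deltaMap k w u) f (Fin.cons b x)
        = if x = u then f (Fin.cons b w) else 0 := by
          rw [idTensor_apply_cons, deltaMap_apply]
      _ = ∑ a : Fin 2, if b = a then if x = u then f (Fin.cons a w) else 0 else 0 := by
          rw [Fintype.sum_ite_eq]
      _ = (∑ a : Fin 2, deltaMap k (Fin.cons a w : Word (m + 1))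
            (Fin.cons a u : Word (p + 1))) f (Fin.cons b x) := by
          simp only [LinearMap.sum_apply, Finset.sum_apply, deltaMap_apply, Fin.cons_inj, ite_and]

theorem tensorId_deltaMap :
    tensorId k (deltaMap k w u) =
      ∑ a : Fin 2, deltaMap k (Fin.snoc w a : Word (m + 1)) (Fin.snoc u a : Word (p + 1)) := by
  refine LinearMap.ext fun f => funext fun y => ?_
  cases y using Fin.snocCases with
  | snoc x b =>
    calc tensorId k (deltaMap k w u) f (Fin.snoc x b)
        = if x = u then f (Fin.snoc w b) else 0 := by
          rw [tensorId_apply_snoc, deltaMap_apply]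
      _ = ∑ a : Fin 2, if b = a then if x = u then f (Fin.snoc w a) else 0 else 0 := by
          rw [Fintype.sum_ite_eq]
      _ = (∑ a : Fin 2, deltaMap k (Fin.snoc w a : Word (m + 1))
            (Fin.snoc u a : Word (p + 1))) f (Fin.snoc x b) := by
          simp only [LinearMap.sum_apply, Finset.sum_apply, deltaMap_apply, Fin.snoc_inj,
            and_comm (a := x = u), ite_and]

theorem F2_single : F2 k m p (Finsupp.single (w, u) 1) = deltaMap k w u := by
  simp only [F2, Finsupp.lift_apply, zero_smul, Finsupp.sum_single_index, one_smul]

theorem D2_single :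
    D2 k m p (Finsupp.single (w, u) 1) =
      (∑ a : Fin 2, Finsupp.single (Fin.cons a w, Fin.cons a u) 1) +
        (-1 : k) ^ (p + m + 1) •
          ∑ a : Fin 2, Finsupp.single (Fin.snoc w a, Fin.snoc u a) 1 := by
  simp only [D2, Finsupp.lift_apply, zero_smul, Finsupp.sum_single_index, one_smul]

end

theorem F_intertwines_D_general (k : Type) [Field k] (m p : ℕ) (w : Word m) (u : Word p) :
    F2 k (m + 1) (p + 1) (D2 k m p (Finsupp.single (w, u) 1)) =
      idTensor k (deltaMap k w u) +
        (-1 : k) ^ (p + m + 1) • tensorId k (deltaMap k w u) := by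
  rw [D2_single, idTensor_deltaMap, tensorId_deltaMap]
  simp only [map_add, map_smul, map_sum, F2_single]

/-- for `k` of characteristic zero and `V = k²`, the maps `F` intertwine the
combinatorial differential `D` with the tensor-product map:
`F_{m+1,p+1}(D_{m,p}(w, u)) = id_V ⊗ δ_{w,u} + (−1)^{p+m+1} δ_{w,u} ⊗ id_V`. -/
theorem F_intertwines_D (k : Type) [Field k] [CharZero k] (m p : ℕ)
    (w : Word m) (u : Word p) :
    F2 k (m + 1) (p + 1) (D2 k m p (Finsupp.single (w, u) 1))
      = idTensor k (deltaMap k w u)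
        + ((-1 : k) ^ (p + m + 1)) • tensorId k (deltaMap k w u) :=
  F_intertwines_D_general k m p w u
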